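/- Let Σ be a finite alphabet. A language L ⊆ Σ* is LIKE-characterizable (i.e., L is the language of some boolean combination of LIKE pattern matching conditions) if and only if L belongs to the boolean closure (under finite union, finite intersection, and complement relative to Σ*) of the family of languages of the form u_0 Σ* u_1 Σ* ⋯ Σ* u_s, where s ≥ 0 and u_0, u_1, …, u_s ∈ Σ* are words. -/

import Mathlib

/-!
In the semiring `Language α`, addition is union and multiplication is concatenation. The language of
a pattern is the product of the languages of its symbols, and over a finite alphabet the language of
`_` is the finite sum of the one-letter languages. So every pattern language lies in the subsemiring
generated by the one-letter languages and `Σ*`. By distributivity its elements are finite sums of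
products of generators, and such a product is a language `u₀ Σ* u₁ Σ* ⋯ Σ* uₛ`. Conversely,
`u₀ Σ* u₁ Σ* ⋯ Σ* uₛ` is the language of the pattern `u₀ % u₁ % ⋯ % uₛ`.
-/

/-- A symbol of a LIKE pattern: a constant letter, the single-character
wildcard `_`, or the multi-character wildcard `%`. -/
inductive LikeSym (α : Type) : Type where
  | const : α → LikeSym α
  | wild : LikeSym α      -- the single-character wildcard `_`
  | percent : LikeSym α   -- the multi-character wildcard `%`

/-- The strings matched by a single pattern symbol. -/
def SymMatches {α : Type} : LikeSym α → List α → Prop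
  | .const a, w => w = [a]
  | .wild, w => w.length = 1
  | .percent, _ => True

/-- A string `w` matches a LIKE pattern `p` if `w` splits into consecutive
factors, one per pattern symbol. -/
def Matches {α : Type} : List (LikeSym α) → List α → Prop
  | [], w => w = []
  | s :: p, w => ∃ u v, w = u ++ v ∧ SymMatches s u ∧ Matches p v


/-- A LIKE expression: a boolean combination (AND, OR, NOT) of LIKE patterns. -/
inductive LikeExpr (α : Type) : Type where
  | pat : List (LikeSym α) → LikeExpr α
  | and : LikeExpr α → LikeExpr α → LikeExpr α
  | or : LikeExpr α → LikeExpr α → LikeExpr α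
  | not : LikeExpr α → LikeExpr α

/-- A string matches a LIKE expression if the boolean combination of the
individual pattern-matching conditions evaluates to true. -/
def EMatches {α : Type} : LikeExpr α → List α → Prop
  | .pat p, w => Matches p w
  | .and e f, w => EMatches e w ∧ EMatches f w
  | .or e f, w => EMatches e w ∨ EMatches f w
  | .not e, w => ¬ EMatches e w

/-- A LIKE expression is monotone if it contains no negation. -/
def MonotoneExpr {α : Type} : LikeExpr α → Prop
  | .pat _ => True
  | .and e f => MonotoneExpr e ∧ MonotoneExpr f
  | .or e f => MonotoneExpr e ∧ MonotoneExpr f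
  | .not _ => False
/-- The boolean closure of a family `X` of sets: the smallest family containing
`X` that is closed under (finite) union, (finite) intersection, and complement. -/
inductive BoolClosure {β : Type} (X : Set (Set β)) : Set β → Prop
  | base {L : Set β} : L ∈ X → BoolClosure X L
  | union {L M : Set β} : BoolClosure X L → BoolClosure X M → BoolClosure X (L ∪ M)
  | inter {L M : Set β} : BoolClosure X L → BoolClosure X M → BoolClosure X (L ∩ M)
  | compl {L : Set β} : BoolClosure X L → BoolClosure X Lᶜ

/-- For a nonempty list of words `[u₀, u₁, …, uₛ]`, the language
`u₀ Σ* u₁ Σ* ⋯ Σ* uₛ` of strings `u₀ v₁ u₁ v₂ ⋯ vₛ uₛ`. -/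
def SegLang {α : Type} : List (List α) → Set (List α)
  | [] => {([] : List α)}
  | [u] => {u}
  | u :: us => {w : List α | ∃ v r : List α, w = u ++ v ++ r ∧ r ∈ SegLang us}

section BoolClosure

variable {β : Type} {X Y : Set (Set β)} {L : Set β}

theorem BoolClosure.trans (hL : BoolClosure X L) (hXY : ∀ M ∈ X, BoolClosure Y M) :
    BoolClosure Y L := by
  induction hL with
  | base h => exact hXY _ h
  | union _ _ ihL ihM => exact ihL.union ihM
  | inter _ _ ihL ihM => exact ihL.inter ihM
  | compl _ ih => exact ih.compl

theorem BoolClosure.empty (hX : X.Nonempty) : BoolClosure X ∅ := by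
  obtain ⟨M, hM⟩ := hX
  simpa only [Set.inter_compl_self] using (BoolClosure.base hM).inter (BoolClosure.base hM).compl

end BoolClosure

theorem boolClosure_of_mem_addSubmonoid_closure {α : Type} {X : Set (Language α)}
    (hX : X.Nonempty) {L : Language α} (hL : L ∈ AddSubmonoid.closure X) :
    BoolClosure (β := List α) X L := by
  induction hL using AddSubmonoid.closure_induction with
  | mem M hM => exact .base hM
  | zero => exact .empty hX
  | add M N _ _ ihM ihN => exact ihM.union ihN

theorem mem_sum_language {α ι : Type*} (s : Finset ι) (f : ι → Language α) (w : List α) :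
    w ∈ ∑ i ∈ s, f i ↔ ∃ i ∈ s, w ∈ f i := by
  classical
  induction s using Finset.induction_on with
  | empty => simp
  | insert i s hi ih => simp [Finset.sum_insert hi, Language.mem_add, ih]

theorem singleton_mul_singleton_language {α : Type*} (u v : List α) :
    ({u} * {v} : Language α) = {u ++ v} :=
  Set.image2_singleton

section Pattern

variable {α : Type}

/-- The language of the strings matched by a single pattern symbol. -/
def symLanguage (s : LikeSym α) : Language α :=
  {w | SymMatches s w}

/-- The language of the strings matching a LIKE pattern. -/
def patternLanguage (p : List (LikeSym α)) : Language α :=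
  {w | Matches p w}

theorem symLanguage_const (a : α) : symLanguage (.const a) = {[a]} :=
  rfl

theorem symLanguage_percent : symLanguage (.percent : LikeSym α) = ⊤ :=
  rfl

theorem symLanguage_wild [Fintype α] : symLanguage (.wild : LikeSym α) = ∑ a : α, {[a]} := by
  ext w
  simp only [mem_sum_language, Finset.mem_univ, true_and]
  exact List.length_eq_one_iff

theorem patternLanguage_cons (s : LikeSym α) (p : List (LikeSym α)) :
    patternLanguage (s :: p) = symLanguage s * patternLanguage p := by
  ext w
  rw [Language.mem_mul]
  constructor
  · rintro ⟨u, v, rfl, hu, hv⟩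
    exact ⟨u, hu, v, hv, rfl⟩
  · rintro ⟨u, hu, v, hv, rfl⟩
    exact ⟨u, v, rfl, hu, hv⟩

theorem patternLanguage_eq_prod (p : List (LikeSym α)) :
    patternLanguage p = (p.map symLanguage).prod := by
  induction p with
  | nil => rfl
  | cons s p ih => rw [patternLanguage_cons, ih, List.map_cons, List.prod_cons]

theorem patternLanguage_append (p q : List (LikeSym α)) :
    patternLanguage (p ++ q) = patternLanguage p * patternLanguage q := by
  simp only [patternLanguage_eq_prod, List.map_append, List.prod_append]

theorem patternLanguage_map_const (u : List α) : patternLanguage (u.map .const) = {u} := by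
  induction u with
  | nil => rfl
  | cons a u ih =>
    rw [List.map_cons, patternLanguage_cons, ih, symLanguage_const,
      singleton_mul_singleton_language, List.singleton_append]

theorem exists_eMatches_iff_boolClosure_range_patternLanguage (L : Set (List α)) :
    (∃ e : LikeExpr α, L = {w | EMatches e w}) ↔ BoolClosure (Set.range patternLanguage) L := by
  constructor
  · rintro ⟨e, rfl⟩
    induction e with
    | pat p => exact .base ⟨p, rfl⟩
    | and e f ihe ihf => exact ihe.inter ihf
    | or e f ihe ihf => exact ihe.union ihf
    | not e ih => exact ih.compl
  · intro hL
    induction hL with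
    | base h =>
      obtain ⟨p, rfl⟩ := h
      exact ⟨.pat p, rfl⟩
    | union _ _ ihL ihM =>
      obtain ⟨e, rfl⟩ := ihL
      obtain ⟨f, rfl⟩ := ihM
      exact ⟨.or e f, rfl⟩
    | inter _ _ ihL ihM =>
      obtain ⟨e, rfl⟩ := ihL
      obtain ⟨f, rfl⟩ := ihM
      exact ⟨.and e f, rfl⟩
    | compl _ ih =>
      obtain ⟨e, rfl⟩ := ih
      exact ⟨.not e, rfl⟩

end Pattern

section SegLang

variable {α : Type}

/-- `SegLang` as an element of the semiring of languages. -/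
def segLanguage (us : List (List α)) : Language α :=
  SegLang us

theorem segLanguage_singleton (u : List α) : segLanguage [u] = {u} :=
  rfl

theorem segLanguage_cons (u : List α) {us : List (List α)} (hus : us ≠ []) :
    segLanguage (u :: us) = {u} * (⊤ * segLanguage us) := by
  obtain ⟨u', us, rfl⟩ := List.exists_cons_of_ne_nil hus
  ext w
  constructor
  · rintro ⟨v, r, rfl, hr⟩
    rw [List.append_assoc]
    exact Language.append_mem_mul rfl (Language.append_mem_mul trivial hr)
  · rintro ⟨_, rfl, _, ⟨v, -, r, hr, rfl⟩, rfl⟩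
    exact ⟨v, r, (List.append_assoc _ _ _).symm, hr⟩

theorem top_mul_segLanguage {us : List (List α)} (hus : us ≠ []) :
    ⊤ * segLanguage us = segLanguage ([] :: us) := by
  rw [segLanguage_cons [] hus]
  exact (one_mul _).symm

theorem singleton_mul_segLanguage_cons (v u : List α) (us : List (List α)) :
    {v} * segLanguage (u :: us) = segLanguage ((v ++ u) :: us) := by
  rcases eq_or_ne us [] with rfl | hus
  · exact singleton_mul_singleton_language v u
  · rw [segLanguage_cons _ hus, segLanguage_cons _ hus, ← mul_assoc,
      singleton_mul_singleton_language]

/-- The pattern `u₀ % u₁ % ⋯ % uₛ` of the words `us = [u₀, …, uₛ]`. -/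
def segPattern (us : List (List α)) : List (LikeSym α) :=
  [.percent].intercalate (us.map (List.map .const))

theorem patternLanguage_segPattern (us : List (List α)) :
    patternLanguage (segPattern us) = segLanguage us := by
  induction us with
  | nil => rfl
  | cons u us ih =>
    rcases eq_or_ne us [] with rfl | hus
    · simpa [segPattern, segLanguage_singleton] using patternLanguage_map_const u
    · have hcons : segPattern (u :: us) = u.map .const ++ .percent :: segPattern us := by
        simp [segPattern, List.intercalate_cons_of_ne_nil, hus]
      rw [hcons, patternLanguage_append, patternLanguage_cons, patternLanguage_map_const,
        symLanguage_percent, ih, segLanguage_cons u hus]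

/-- The family of the languages `u₀ Σ* u₁ Σ* ⋯ Σ* uₛ` with `s ≥ 0`. -/
def segLanguages (α : Type) : Set (Language α) :=
  {M | ∃ us : List (List α), us ≠ [] ∧ M = SegLang us}

/-- The one-letter languages together with `Σ*`, whose products are the members of
`segLanguages α`. -/
def segGenerators (α : Type) : Set (Language α) :=
  insert ⊤ (Set.range fun a => {[a]})

theorem submonoid_closure_segGenerators_subset :
    (Submonoid.closure (segGenerators α) : Set (Language α)) ⊆ segLanguages α := by
  intro M hM
  induction hM using Submonoid.closure_induction_left with
  | one => exact ⟨[[]], List.cons_ne_nil _ _, rfl⟩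
  | mul_left G hG M _ ih =>
    obtain ⟨us, hus, rfl⟩ := ih
    rcases hG with rfl | ⟨a, rfl⟩
    · exact ⟨[] :: us, List.cons_ne_nil _ _, top_mul_segLanguage hus⟩
    · obtain ⟨u, us, rfl⟩ := List.exists_cons_of_ne_nil hus
      exact ⟨(a :: u) :: us, List.cons_ne_nil _ _, singleton_mul_segLanguage_cons [a] u us⟩

theorem symLanguage_mem_closure_segGenerators [Finite α] (s : LikeSym α) :
    symLanguage s ∈ Subsemiring.closure (segGenerators α) := by
  have hletter (a : α) : {[a]} ∈ Subsemiring.closure (segGenerators α) :=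
    Subsemiring.subset_closure (Set.mem_insert_of_mem _ ⟨a, rfl⟩)
  cases s with
  | const a => exact hletter a
  | percent => exact Subsemiring.subset_closure (Set.mem_insert _ _)
  | wild =>
    cases nonempty_fintype α
    rw [symLanguage_wild]
    exact sum_mem fun a _ => hletter a

theorem patternLanguage_mem_closure_segGenerators [Finite α] (p : List (LikeSym α)) :
    patternLanguage p ∈ Subsemiring.closure (segGenerators α) := by
  rw [patternLanguage_eq_prod]
  refine list_prod_mem fun M hM => ?_
  obtain ⟨s, -, rfl⟩ := List.mem_map.1 hM
  exact symLanguage_mem_closure_segGenerators s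

theorem patternLanguage_mem_addSubmonoid_closure_segLanguages [Finite α] (p : List (LikeSym α)) :
    patternLanguage p ∈ AddSubmonoid.closure (segLanguages α) :=
  AddSubmonoid.closure_mono submonoid_closure_segGenerators_subset
    (Subsemiring.mem_closure_iff.1 (patternLanguage_mem_closure_segGenerators p))

end SegLang

/-- Over a finite alphabet, a language is LIKE-characterizable iff it lies in the
boolean closure of the languages of the form `u₀ Σ* u₁ Σ* ⋯ Σ* uₛ`. -/
theorem like_characterizable_iff_boolean_closure {α : Type} [Fintype α]
    (L : Set (List α)) :
    (∃ e : LikeExpr α, L = {w : List α | EMatches e w}) ↔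
      BoolClosure
        {M : Set (List α) | ∃ us : List (List α), us ≠ [] ∧ M = SegLang us} L := by
  rw [exists_eMatches_iff_boolClosure_range_patternLanguage]
  refine ⟨fun hL => hL.trans ?_, fun hL => hL.trans ?_⟩
  · rintro _ ⟨p, rfl⟩
    have hne : (segLanguages α).Nonempty := ⟨_, [[]], List.cons_ne_nil _ _, rfl⟩
    exact boolClosure_of_mem_addSubmonoid_closure hne
      (patternLanguage_mem_addSubmonoid_closure_segLanguages p)
  · rintro _ ⟨us, -, rfl⟩
    exact .base ⟨segPattern us, patternLanguage_segPattern us⟩
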